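/- Let f : ℝ^d → ℝ be 1-Lipschitz (Euclidean norm) and m_f-piecewise linear with convex subdomains Ω₁,…,Ω_{m_f}. Then there exists a GroupSort neural network of grouping size 2 satisfying Assumption 1 that represents f exactly, with depth 2⌈log₂(m_f)⌉ + 1 and size at most 3m_f² + m_f − 1. -/

import Mathlib

open Matrix

/-- A GroupSort feedforward neural network with grouping size `k`, input dimension `d`
and real output.  `depth` is the number of affine layers (`q` in the paper), so there are
`depth - 1` hidden layers of widths `width 1, …, width (depth - 1)` (each divisible by `k`),
with `width 0 = d` (input) and `width depth = 1` (output). -/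
structure GroupSortNet (k d : ℕ) where
  depth : ℕ
  depth_pos : 1 ≤ depth
  width : ℕ → ℕ
  width_in : width 0 = d
  width_out : width depth = 1
  width_div : ∀ i, 1 ≤ i → i ≤ depth - 1 → k ∣ width i
  V : (i : ℕ) → Matrix (Fin (width (i + 1))) (Fin (width i)) ℝ
  c : (i : ℕ) → Fin (width (i + 1)) → ℝ

/-- The GroupSort activation with grouping size `k`: the coordinates are split into
consecutive groups of `k` elements and each group is sorted in decreasing order. -/
noncomputable def groupSortFun (k : ℕ) {ν : ℕ} (x : Fin ν → ℝ) : Fin ν → ℝ := fun i =>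
  if hk : 0 < k then
    let grp : Fin k → ℝ := fun j =>
      if h : ((i : ℕ) / k) * k + (j : ℕ) < ν then x ⟨((i : ℕ) / k) * k + (j : ℕ), h⟩ else 0
    (grp ∘ Tuple.sort grp)
      ⟨k - 1 - (i : ℕ) % k, lt_of_le_of_lt (Nat.sub_le _ _) (Nat.sub_lt hk Nat.one_pos)⟩
  else x i

/-- Output of the hidden layers: `post x i` is the (activated) output of layer `i`. -/
noncomputable def GroupSortNet.post {k d : ℕ} (N : GroupSortNet k d) (x : Fin d → ℝ) :
    (i : ℕ) → Fin (N.width i) → ℝ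
  | 0 => fun j => x (Fin.cast N.width_in j)
  | i + 1 => groupSortFun k (N.V i *ᵥ N.post x i + N.c i)

/-- The real-valued function computed by the network (no activation after the last
affine layer). -/
noncomputable def GroupSortNet.eval {k d : ℕ} (N : GroupSortNet k d) (x : Fin d → ℝ) : ℝ :=
  (N.V (N.depth - 1) *ᵥ N.post x (N.depth - 1) + N.c (N.depth - 1))
    ⟨0, by
      have h : N.depth - 1 + 1 = N.depth := Nat.succ_pred_eq_of_pos N.depth_pos
      rw [h, N.width_out]
      exact Nat.one_pos⟩

/-- The size of the network: the sum of the widths of the hidden layers. -/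
def GroupSortNet.size {k d : ℕ} (N : GroupSortNet k d) : ℕ :=
  ∑ i ∈ Finset.Icc 1 (N.depth - 1), N.width i

/-- Assumption 1: `‖V₁‖_{2,∞} ≤ 1` (every row of `V₁` has Euclidean norm at most `1`),
`‖V_i‖_∞ ≤ 1` for `i = 2, …, q` (every row has `ℓ¹`-norm at most `1`), and all offsets
are bounded by some constant `K₂ ≥ 0`. -/
def GroupSortNet.Assumption1 {k d : ℕ} (N : GroupSortNet k d) : Prop :=
  (∀ r, ∑ j, (N.V 0 r j) ^ 2 ≤ 1) ∧
  (∀ i, 1 ≤ i → i < N.depth → ∀ r, ∑ j, |N.V i r j| ≤ 1) ∧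
  (∃ K₂ : ℝ, 0 ≤ K₂ ∧ ∀ i, i < N.depth → ∀ r, |N.c i r| ≤ K₂)

/-- A (possibly unbounded, possibly partly open) polyhedral set: a finite intersection of
(strict or non-strict) affine half-spaces. -/
def IsPolyhedralSet {d : ℕ} (S : Set (Fin d → ℝ)) : Prop :=
  ∃ (n : ℕ) (a : Fin n → Fin d → ℝ) (b : Fin n → ℝ) (strict : Fin n → Bool),
    S = {x | ∀ i, if strict i then ∑ j, a i j * x j < b i else ∑ j, a i j * x j ≤ b i}

/-- `f` is a continuous `m`-piecewise linear function on `ℝ^d` with pieces `Ω` and affine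
functions `x ↦ ⟨a i, x⟩ + b i`. -/
def IsPWLWith {d : ℕ} (f : (Fin d → ℝ) → ℝ) (m : ℕ)
    (Ω : Fin m → Set (Fin d → ℝ)) (a : Fin m → Fin d → ℝ) (b : Fin m → ℝ) : Prop :=
  Continuous f ∧
  (∀ i, IsPolyhedralSet (Ω i)) ∧
  (∀ i j, i ≠ j → Disjoint (Ω i) (Ω j)) ∧
  (⋃ i, Ω i) = Set.univ ∧
  (∀ i, ∀ x ∈ Ω i, f x = ∑ j, a i j * x j + b i)

/-- There is a partition of `ℝ^d` into `M` polyhedral sets, refining the partition `Ω`,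
on each of which no difference `ℓ_i - ℓ_j` of two affine pieces changes sign. -/
def IsSignRefinement {d : ℕ} (m : ℕ) (Ω : Fin m → Set (Fin d → ℝ))
    (a : Fin m → Fin d → ℝ) (b : Fin m → ℝ) (M : ℕ) : Prop :=
  ∃ Ω' : Fin M → Set (Fin d → ℝ),
    (∀ p, IsPolyhedralSet (Ω' p)) ∧
    (∀ p q, p ≠ q → Disjoint (Ω' p) (Ω' q)) ∧
    (⋃ p, Ω' p) = Set.univ ∧
    (∀ p, ∃ i, Ω' p ⊆ Ω i) ∧
    (∀ p : Fin M, ∀ i j : Fin m,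
      (∀ x ∈ Ω' p, ∑ t, a i t * x t + b i ≤ ∑ t, a j t * x t + b j) ∨
      (∀ x ∈ Ω' p, ∑ t, a j t * x t + b j ≤ ∑ t, a i t * x t + b i))

/-- `f : ℝ → ℝ` is a continuous `m`-piecewise linear function: `ℝ` is partitioned into
`m` intervals on the `i`-th of which `f x = a i * x + b i`. -/
def IsPWLRealWith (f : ℝ → ℝ) (m : ℕ) (I : Fin m → Set ℝ) (a b : Fin m → ℝ) : Prop :=
  Continuous f ∧
  (∀ i, (I i).OrdConnected) ∧
  (∀ i j, i ≠ j → Disjoint (I i) (I j)) ∧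
  (⋃ i, I i) = Set.univ ∧
  (∀ i, ∀ x ∈ I i, f x = a i * x + b i)

def IsPWLReal (f : ℝ → ℝ) (m : ℕ) : Prop :=
  ∃ I a b, IsPWLRealWith f m I a b


/-- Sandwich: a 1-Lipschitz affine function above `f` on `S` and below `f` on `T`. -/
theorem sandwich_affine {E : Type*} [NormedAddCommGroup E] [InnerProductSpace ℝ E] [CompleteSpace E]
    (S T : Set E) (hS : Convex ℝ S) (hT : Convex ℝ T) (hSn : S.Nonempty) (hTn : T.Nonempty)
    (f : E → ℝ) (hlip : ∀ x y, |f x - f y| ≤ ‖x - y‖)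
    (hfS : ∀ x ∈ S, ∀ y ∈ S, ∀ s t : ℝ, 0 ≤ s → 0 ≤ t → s + t = 1 →
      f (s • x + t • y) = s * f x + t * f y)
    (hfT : ∀ x ∈ T, ∀ y ∈ T, ∀ s t : ℝ, 0 ≤ s → 0 ≤ t → s + t = 1 →
      f (s • x + t • y) = s * f x + t * f y) :
    ∃ (v : E) (c : ℝ), ‖v‖ ≤ 1 ∧ (∀ x ∈ S, f x ≤ inner ℝ v x + c) ∧
      (∀ x ∈ T, inner ℝ v x + c ≤ f x) := by
  set U : Set (E × ℝ) := {p | ∃ y ∈ T, f y + ‖p.1 - y‖ < p.2} with hU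
  set G : Set (E × ℝ) := {p | p.1 ∈ S ∧ p.2 = f p.1} with hG
  have hUo : IsOpen U := by
    have : U = ⋃ y ∈ T, {p : E × ℝ | f y + ‖p.1 - y‖ < p.2} := by
      ext p; simp [hU]
    rw [this]
    exact isOpen_biUnion fun y _ => isOpen_lt (by fun_prop) (by fun_prop)
  have hUc : Convex ℝ U := by
    rintro ⟨x, t⟩ ⟨y, hy, h1⟩ ⟨x', t'⟩ ⟨y', hy', h2⟩ α β hα hβ hab
    refine ⟨α • y + β • y', hT hy hy' hα hβ hab, ?_⟩
    rw [hfT y hy y' hy' α β hα hβ hab]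
    simp only [Prod.fst_add, Prod.smul_fst, Prod.snd_add, Prod.smul_snd, smul_eq_mul] at *
    have e : α • x + β • x' - (α • y + β • y') = α • (x - y) + β • (x' - y') := by
      simp only [smul_sub]; abel
    have h3 : ‖α • x + β • x' - (α • y + β • y')‖ ≤ α * ‖x - y‖ + β * ‖x' - y'‖ := by
      rw [e]
      refine (norm_add_le _ _).trans (le_of_eq ?_)
      rw [norm_smul, norm_smul, Real.norm_of_nonneg hα, Real.norm_of_nonneg hβ]
    rcases hα.eq_or_lt with h0 | h0
    · subst h0
      have : β = 1 := by linarith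
      subst this
      simp at h3 ⊢
      linarith
    · nlinarith [mul_lt_mul_of_pos_left h1 h0, mul_le_mul_of_nonneg_left h2.le hβ]
  have hGc : Convex ℝ G := by
    rintro ⟨x, t⟩ ⟨hx, h1⟩ ⟨x', t'⟩ ⟨hx', h2⟩ α β hα hβ hab
    simp only at hx h1 hx' h2
    refine ⟨hS hx hx' hα hβ hab, ?_⟩
    simp only [Prod.fst_add, Prod.smul_fst, Prod.snd_add, Prod.smul_snd, smul_eq_mul]
    rw [hfS x hx x' hx' α β hα hβ hab, h1, h2]
  have hdisj : Disjoint U G := by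
    rw [Set.disjoint_left]
    rintro ⟨x, t⟩ ⟨y, hy, h1⟩ ⟨hx, h2⟩
    simp only at h1 h2
    have := (abs_le.1 (hlip x y)).2
    linarith
  obtain ⟨φ, u, hφU, hφG⟩ := geometric_hahn_banach_open hUc hUo hGc hdisj
  set g : StrongDual ℝ E := φ.comp (ContinuousLinearMap.inl ℝ E ℝ) with hg
  set β : ℝ := φ (0, 1) with hβ
  have hφ : ∀ x t, φ (x, t) = g x + β * t := by
    intro x t
    have : ((x, t) : E × ℝ) = (x, 0) + t • (0, 1) := by simp
    rw [this, map_add, map_smul, smul_eq_mul, mul_comm]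
    simp [hg, hβ]
  obtain ⟨y0, hy0⟩ := hTn
  obtain ⟨x0, hx0⟩ := hSn
  have hβneg : β < 0 := by
    have h1 := hφG (x0, f x0) ⟨hx0, rfl⟩
    have h2 := hφU (x0, f y0 + ‖x0 - y0‖ + 1) ⟨y0, hy0, by simp⟩
    rw [hφ] at h1 h2
    have h3 := (abs_le.1 (hlip x0 y0)).2
    by_contra hcon
    push Not at hcon
    nlinarith
  have key : ∀ x, ∀ y ∈ T, (u - g x) / β ≤ f y + ‖x - y‖ := by
    intro x y hy
    refine le_of_forall_gt fun t ht => ?_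
    have := hφU (x, t) ⟨y, hy, ht⟩
    rw [hφ] at this
    rw [div_lt_iff_of_neg hβneg]
    linarith
  set v : E := (InnerProductSpace.toDual ℝ E).symm (-(β⁻¹) • g) with hv
  have hvin : ∀ x, inner ℝ v x = -(β⁻¹) * g x := by
    intro x
    rw [hv, InnerProductSpace.toDual_symm_apply]
    simp
  have hh : ∀ x, inner ℝ v x + u / β = (u - g x) / β := by
    intro x; rw [hvin]; ring
  refine ⟨v, u / β, ?_, ?_, ?_⟩
  · by_contra hcon
    push Not at hcon
    have hk : ∀ s : ℝ, 0 ≤ s → s * (‖v‖ * ‖v‖ - ‖v‖) ≤ f y0 - inner ℝ v y0 - u / β := by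
      intro s hs
      have := key (y0 + s • v) y0 hy0
      rw [← hh, inner_add_right, inner_smul_right, real_inner_self_eq_norm_mul_norm,
        add_sub_cancel_left, norm_smul, Real.norm_of_nonneg hs] at this
      linarith
    have hpos : 0 < ‖v‖ * ‖v‖ - ‖v‖ := by nlinarith
    set C := f y0 - inner ℝ v y0 - u / β
    have := hk ((|C| + 1) / (‖v‖ * ‖v‖ - ‖v‖)) (by positivity)
    rw [div_mul_cancel₀ _ hpos.ne'] at this
    linarith [le_abs_self C]
  · intro x hx
    rw [hh, le_div_iff_of_neg hβneg]
    have := hφG (x, f x) ⟨hx, rfl⟩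
    rw [hφ] at this
    linarith
  · intro x hx
    rw [hh]
    have := key x x hx
    simpa using this

theorem sandwich_coord {d : ℕ} (S T : Set (Fin d → ℝ)) (hS : Convex ℝ S) (hT : Convex ℝ T)
    (f : (Fin d → ℝ) → ℝ)
    (hlip : ∀ x y : Fin d → ℝ, |f x - f y| ≤ Real.sqrt (∑ i, (x i - y i) ^ 2))
    (hfS : ∃ (a : Fin d → ℝ) (b : ℝ), ∀ x ∈ S, f x = ∑ j, a j * x j + b)
    (hfT : ∃ (a : Fin d → ℝ) (b : ℝ), ∀ x ∈ T, f x = ∑ j, a j * x j + b) :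
    ∃ (v : Fin d → ℝ) (c : ℝ), ∑ j, (v j) ^ 2 ≤ 1 ∧ (∀ x ∈ S, f x ≤ ∑ j, v j * x j + c) ∧
      (∀ x ∈ T, ∑ j, v j * x j + c ≤ f x) := by
  have main : ∀ (S T : Set (Fin d → ℝ)), Convex ℝ S → Convex ℝ T → S.Nonempty → T.Nonempty →
      (∃ (a : Fin d → ℝ) (b : ℝ), ∀ x ∈ S, f x = ∑ j, a j * x j + b) →
      (∃ (a : Fin d → ℝ) (b : ℝ), ∀ x ∈ T, f x = ∑ j, a j * x j + b) →
      ∃ (v : Fin d → ℝ) (c : ℝ), ∑ j, (v j) ^ 2 ≤ 1 ∧ (∀ x ∈ S, f x ≤ ∑ j, v j * x j + c) ∧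
      (∀ x ∈ T, ∑ j, v j * x j + c ≤ f x) := by
    intro S T hS hT hSn hTn hfS hfT
    let e : EuclideanSpace ℝ (Fin d) →ₗ[ℝ] (Fin d → ℝ) := (WithLp.linearEquiv 2 ℝ (Fin d → ℝ)).toLinearMap
    have aff : ∀ S : Set (Fin d → ℝ), Convex ℝ S →
        (∃ (a : Fin d → ℝ) (b : ℝ), ∀ x ∈ S, f x = ∑ j, a j * x j + b) →
        ∀ x ∈ e ⁻¹' S, ∀ y ∈ e ⁻¹' S, ∀ s t : ℝ, 0 ≤ s → 0 ≤ t → s + t = 1 →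
          f (e (s • x + t • y)) = s * f (e x) + t * f (e y) := by
      rintro S hS ⟨a, b, h⟩ x hx y hy s t hs ht hst
      rw [h _ hx, h _ hy, map_add, map_smul, map_smul, h _ (hS hx hy hs ht hst)]
      have : b = s * b + t * b := by rw [← add_mul, hst, one_mul]
      simp only [Pi.add_apply, Pi.smul_apply, smul_eq_mul, mul_add, Finset.sum_add_distrib,
        Finset.mul_sum]
      have e1 : ∀ z : Fin d → ℝ, ∀ s : ℝ, ∑ j, a j * (s * z j) = ∑ j, s * (a j * z j) := by
        intro z s; exact Finset.sum_congr rfl fun j _ => by ring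
      rw [e1, e1]; linarith
    obtain ⟨x0, hx0⟩ := hSn
    obtain ⟨y0, hy0⟩ := hTn
    obtain ⟨v, c, h1, h2, h3⟩ := sandwich_affine (e ⁻¹' S) (e ⁻¹' T) (hS.linear_preimage e)
      (hT.linear_preimage e) ⟨WithLp.toLp 2 x0, hx0⟩ ⟨WithLp.toLp 2 y0, hy0⟩ (fun x => f (e x))
      (by
        intro x y
        rw [EuclideanSpace.norm_eq]
        have := hlip (e x) (e y)
        simpa [e] using this) (aff S hS hfS) (aff T hT hfT)
    have hin : ∀ x : Fin d → ℝ, inner ℝ v (WithLp.toLp 2 x) = ∑ j, v j * x j := by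
      intro x
      simp [PiLp.inner_apply, mul_comm]
    refine ⟨fun j => v j, c, ?_, ?_, ?_⟩
    · have := EuclideanSpace.real_norm_sq_eq v
      rw [← this]
      nlinarith [norm_nonneg v]
    · intro x hx
      have := h2 (WithLp.toLp 2 x) hx
      rwa [hin] at this
    · intro x hx
      have := h3 (WithLp.toLp 2 x) hx
      rwa [hin] at this
  rcases S.eq_empty_or_nonempty with rfl | hSn
  · rcases T.eq_empty_or_nonempty with rfl | hTn
    · exact ⟨0, 0, by simp, by simp, by simp⟩
    · obtain ⟨v, c, h1, _, h3⟩ := main T T hT hT hTn hTn hfT hfT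
      exact ⟨v, c, h1, by simp, h3⟩
  · rcases T.eq_empty_or_nonempty with rfl | hTn
    · obtain ⟨v, c, h1, h2, _⟩ := main S S hS hS hSn hSn hfS hfS
      exact ⟨v, c, h1, h2, by simp⟩
    · exact main S T hS hT hSn hTn hfS hfT

theorem sort_fin_two (g : Fin 2 → ℝ) :
    (g ∘ Tuple.sort g) 0 = min (g 0) (g 1) ∧ (g ∘ Tuple.sort g) 1 = max (g 0) (g 1) := by
  have hm : (g ∘ Tuple.sort g) 0 ≤ (g ∘ Tuple.sort g) 1 := Tuple.monotone_sort g (by simp)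
  simp only [Function.comp] at *
  have hne : Tuple.sort g 0 ≠ Tuple.sort g 1 := fun h => by
    have := (Tuple.sort g).injective h
    simp at this
  generalize Tuple.sort g 0 = p at *
  generalize Tuple.sort g 1 = q at *
  fin_cases p <;> fin_cases q <;> simp at * <;> simp [hm]

/-- Sorting of consecutive pairs, for sequences. -/
noncomputable def pairSort (g : ℕ → ℝ) (n : ℕ) : ℝ :=
  if n % 2 = 0 then max (g n) (g (n + 1)) else min (g (n - 1)) (g n)

theorem groupSortFun_two {ν : ℕ} (hν : 2 ∣ ν) (x : Fin ν → ℝ) (g : ℕ → ℝ)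
    (hx : ∀ j : Fin ν, x j = g j) (i : Fin ν) : groupSortFun 2 x i = pairSort g i := by
  have hi := i.2
  have h0 : (i : ℕ) / 2 * 2 + 0 < ν := by omega
  have h1 : (i : ℕ) / 2 * 2 + 1 < ν := by omega
  unfold groupSortFun
  rw [dif_pos (by norm_num)]
  simp only
  obtain ⟨e0, e1⟩ := sort_fin_two (fun j : Fin 2 =>
    if h : ((i : ℕ) / 2) * 2 + (j : ℕ) < ν then x ⟨((i : ℕ) / 2) * 2 + (j : ℕ), h⟩ else 0)
  unfold pairSort
  by_cases hp : (i : ℕ) % 2 = 0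
  · have hidx : (⟨2 - 1 - (i : ℕ) % 2, by omega⟩ : Fin 2) = 1 := by
      apply Fin.ext; simp [hp]
    rw [hidx, e1, if_pos hp]
    simp only [Fin.val_zero, Fin.val_one]
    rw [dif_pos h0, dif_pos h1, hx, hx]
    simp only
    congr 2 <;> omega
  · have hidx : (⟨2 - 1 - (i : ℕ) % 2, by omega⟩ : Fin 2) = 0 := by
      apply Fin.ext; simp; omega
    rw [hidx, e0, if_neg hp]
    simp only [Fin.val_zero, Fin.val_one]
    rw [dif_pos h0, dif_pos h1, hx, hx]
    simp only
    congr 2 <;> omega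

/-- A network with an arbitrary first layer and selection matrices afterwards. -/
noncomputable def selNet {d : ℕ} (D : ℕ) (w : ℕ → ℕ) (h0 : w 0 = d) (hD : w (D + 1) = 1)
    (hev : ∀ i, 1 ≤ i → i ≤ D → 2 ∣ w i) (A : ℕ → Fin d → ℝ) (B : ℕ → ℝ) (s : ℕ → ℕ → ℕ) :
    GroupSortNet 2 d where
  depth := D + 1
  depth_pos := by omega
  width := w
  width_in := h0
  width_out := hD
  width_div := by simpa using hev
  V := fun i => match i with
    | 0 => fun r j => A r (Fin.cast h0 j)
    | i + 1 => fun r j => if (j : ℕ) = s (i + 1) r then 1 else 0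
  c := fun i => match i with
    | 0 => fun r => B r
    | _ + 1 => fun _ => 0

theorem selNet_assumption {d : ℕ} (D : ℕ) (w : ℕ → ℕ) (h0 : w 0 = d) (hD : w (D + 1) = 1)
    (hev : ∀ i, 1 ≤ i → i ≤ D → 2 ∣ w i) (A : ℕ → Fin d → ℝ) (B : ℕ → ℝ) (s : ℕ → ℕ → ℕ)
    (hA : ∀ n, ∑ j, (A n j) ^ 2 ≤ 1) :
    (selNet D w h0 hD hev A B s).Assumption1 := by
  refine ⟨?_, ?_, ?_⟩
  · intro r
    refine le_trans (le_of_eq ?_) (hA r)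
    exact Fintype.sum_equiv (finCongr h0) _ _ (fun j => rfl)
  · intro i hi _ r
    obtain ⟨i, rfl⟩ : ∃ k, i = k + 1 := ⟨i - 1, by omega⟩
    change ∑ j : Fin (w (i + 1)), |if (j : ℕ) = s (i + 1) r then (1 : ℝ) else 0| ≤ 1
    by_cases hs : s (i + 1) r < w (i + 1)
    · rw [Finset.sum_eq_single ⟨s (i + 1) r, hs⟩]
      · simp
      · intro j _ hj
        rw [if_neg (fun h => hj (Fin.ext h))]; simp
      · simp
    · rw [Finset.sum_eq_zero]
      · norm_num
      · intro j _
        have := j.2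
        rw [if_neg (by omega)]; simp
  · refine ⟨∑ r : Fin (w 1), |B r|, by positivity, ?_⟩
    intro i _ r
    rcases i with _ | i
    · exact Finset.single_le_sum (f := fun r : Fin (w 1) => |B r|) (fun _ _ => abs_nonneg _)
        (Finset.mem_univ r)
    · change |(0 : ℝ)| ≤ _
      rw [abs_zero]; positivity

/-- Values after each layer, `selVal g s i` being the output of layer `i + 1`. -/
noncomputable def selVal (g : ℕ → ℝ) (s : ℕ → ℕ → ℕ) : ℕ → ℕ → ℝ
  | 0 => pairSort g
  | i + 1 => pairSort (fun n => selVal g s i (s (i + 1) n))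

theorem selNet_row {d : ℕ} (D : ℕ) (w : ℕ → ℕ) (h0 : w 0 = d) (hD : w (D + 1) = 1)
    (hev : ∀ i, 1 ≤ i → i ≤ D → 2 ∣ w i) (A : ℕ → Fin d → ℝ) (B : ℕ → ℝ) (s : ℕ → ℕ → ℕ)
    (i : ℕ) (y : Fin (w (i + 1)) → ℝ) (r : Fin (w (i + 2))) (hs : s (i + 1) r < w (i + 1)) :
    ((selNet D w h0 hD hev A B s).V (i + 1) *ᵥ y + (selNet D w h0 hD hev A B s).c (i + 1)) r
      = y ⟨s (i + 1) r, hs⟩ := by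
  change (∑ j : Fin (w (i + 1)), (if (j : ℕ) = s (i + 1) r then (1 : ℝ) else 0) * y j) + 0 = _
  rw [Finset.sum_eq_single ⟨s (i + 1) r, hs⟩]
  · simp
  · intro j _ hj
    rw [if_neg (fun h => hj (Fin.ext h))]; simp
  · simp

theorem selNet_post {d : ℕ} (D : ℕ) (w : ℕ → ℕ) (h0 : w 0 = d) (hD : w (D + 1) = 1)
    (hev : ∀ i, 1 ≤ i → i ≤ D → 2 ∣ w i) (A : ℕ → Fin d → ℝ) (B : ℕ → ℝ) (s : ℕ → ℕ → ℕ)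
    (hs : ∀ i, 1 ≤ i → i ≤ D → ∀ n, n < w (i + 1) → s i n < w i) (x : Fin d → ℝ) :
    ∀ i, i + 1 ≤ D → ∀ n : Fin (w (i + 1)),
      (selNet D w h0 hD hev A B s).post x (i + 1) n
        = selVal (fun n => ∑ j, A n j * x j + B n) s i n := by
  intro i
  induction i with
  | zero =>
    intro hi n
    refine groupSortFun_two (hev 1 le_rfl hi) _ _ ?_ n
    intro r
    change (∑ j : Fin (w 0), A r (Fin.cast h0 j) * x (Fin.cast h0 j)) + B r = _
    congr 1
    exact Fintype.sum_equiv (finCongr h0) _ _ (fun j => rfl)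
  | succ i ih =>
    intro hi n
    refine groupSortFun_two (hev (i + 2) (by omega) hi) _ _ ?_ n
    intro r
    have hb := hs (i + 1) (by omega) (by omega) r r.2
    refine (selNet_row D w h0 hD hev A B s i _ r hb).trans ?_
    exact ih (by omega) ⟨_, hb⟩

theorem selNet_eval {d : ℕ} (D : ℕ) (w : ℕ → ℕ) (h0 : w 0 = d) (hD : w (D + 2) = 1)
    (hev : ∀ i, 1 ≤ i → i ≤ D + 1 → 2 ∣ w i) (A : ℕ → Fin d → ℝ) (B : ℕ → ℝ) (s : ℕ → ℕ → ℕ)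
    (hs : ∀ i, 1 ≤ i → i ≤ D + 1 → ∀ n, n < w (i + 1) → s i n < w i) (x : Fin d → ℝ) :
    (selNet (D + 1) w h0 hD hev A B s).eval x
        = selVal (fun n => ∑ j, A n j * x j + B n) s D (s (D + 1) 0) := by
  have hb := hs (D + 1) (by omega) (by omega) 0 (show 0 < w (D + 2) by omega)
  refine (selNet_row (D + 1) w h0 hD hev A B s D _ ⟨0, show 0 < w (D + 2) by omega⟩ hb).trans ?_
  exact selNet_post (D + 1) w h0 hD hev A B s hs x D le_rfl ⟨_, hb⟩

/-- Number of competitors after `i` rounds of a knock-out tournament among `m`. -/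
def rounds (m : ℕ) : ℕ → ℕ
  | 0 => m
  | i + 1 => (rounds m i + 1) / 2

theorem rounds_pos {m : ℕ} (hm : 1 ≤ m) (i : ℕ) : 1 ≤ rounds m i := by
  induction i with
  | zero => exact hm
  | succ i ih => simp only [rounds]; omega

theorem rounds_le {m L : ℕ} (hL : m ≤ 2 ^ L) : ∀ i, i ≤ L → rounds m i ≤ 2 ^ (L - i) := by
  intro i
  induction i with
  | zero => intro _; simpa [rounds] using hL
  | succ i ih =>
    intro hi
    have h1 := ih (by omega)
    have h2 : L - i = (L - (i + 1)) + 1 := by omega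
    rw [h2, pow_succ] at h1
    simp only [rounds]; omega

theorem rounds_clog {m : ℕ} (hm : 1 ≤ m) : rounds m (Nat.clog 2 m) = 1 := by
  have h := rounds_le (Nat.le_pow_clog (by norm_num : 1 < 2) m) (Nat.clog 2 m) le_rfl
  have := rounds_pos hm (Nat.clog 2 m)
  simp at h; omega

theorem rounds_sum (m L : ℕ) :
    (∑ i ∈ Finset.range L, 2 * rounds m (i + 1)) + rounds m L * 2 ≤ 2 * m + 2 * L := by
  suffices h : (∑ i ∈ Finset.range L, 2 * rounds m (i + 1)) + rounds m L * 2 ≤ 2 * m + 2 * L by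
    exact h
  induction L with
  | zero => simp [rounds]; omega
  | succ L ih =>
    rw [Finset.sum_range_succ]
    have : rounds m (L + 1) = (rounds m L + 1) / 2 := rfl
    omega

theorem rounds_total {m : ℕ} (hm : 2 ≤ m) :
    (m + 1) * (∑ i ∈ Finset.range (Nat.clog 2 m), 2 * rounds m (i + 1)) ≤ 3 * m ^ 2 + m - 1 := by
  have main : (∑ i ∈ Finset.range (Nat.clog 2 m), 2 * rounds m (i + 1)) ≤ 3 * m - 2 := by
    by_cases h : 2 * Nat.clog 2 m ≤ m
    · have h1 := rounds_sum m (Nat.clog 2 m)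
      rw [rounds_clog (by omega)] at h1
      omega
    · have h3 : m = 3 ∨ m = 5 := by
        by_contra hc
        apply h
        have : Nat.clog 2 m ≤ m / 2 := by
          apply Nat.clog_le_of_le_pow
          have aux : ∀ k, 2 * (k + 3) + 1 ≤ 2 ^ (k + 3) ∨ k = 0 := by
            intro k
            induction k with
            | zero => right; rfl
            | succ k ih =>
              left
              rcases ih with ih | rfl
              · rw [show k + 1 + 3 = (k + 3) + 1 by ring, pow_succ]; omega
              · norm_num
          by_cases h6 : m ≤ 7
          · interval_cases m <;> simp at hc ⊢
          · have := aux (m / 2 - 3)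
            rw [show m / 2 - 3 + 3 = m / 2 by omega] at this
            omega
        omega
      rcases h3 with rfl | rfl
      · rw [show Nat.clog 2 3 = 2 by decide]; decide
      · rw [show Nat.clog 2 5 = 3 by decide]; decide
  refine (Nat.mul_le_mul_left _ main).trans ?_
  obtain ⟨k, rfl⟩ : ∃ k, m = k + 2 := ⟨m - 2, by omega⟩
  have : 3 * (k + 2) - 2 = 3 * k + 4 := by omega
  rw [this]
  apply Nat.le_sub_of_add_le
  nlinarith

/-- The tournament with operation `op`. -/
def tourn (op : ℝ → ℝ → ℝ) (m : ℕ) (g : ℕ → ℝ) : ℕ → ℕ → ℝ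
  | 0 => g
  | i + 1 => fun q => op (tourn op m g i (min (2 * q) (rounds m i - 1)))
      (tourn op m g i (min (2 * q + 1) (rounds m i - 1)))

theorem tourn_spec (op : ℝ → ℝ → ℝ) (R : ℝ → ℝ → Prop) (hop : ∀ a b, op a b = a ∨ op a b = b)
    (hl : ∀ a b, R (op a b) a) (hr : ∀ a b, R (op a b) b) (hrefl : ∀ a, R a a)
    (htrans : ∀ a b c, R a b → R b c → R a c) {m : ℕ} (hm : 1 ≤ m) (g : ℕ → ℝ) (i : ℕ) :
    (∀ q, q < rounds m i → ∃ p, p < m ∧ tourn op m g i q = g p) ∧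
    (∀ p, p < m → ∃ q, q < rounds m i ∧ R (tourn op m g i q) (g p)) := by
  induction i with
  | zero => exact ⟨fun q hq => ⟨q, hq, rfl⟩, fun p hp => ⟨p, hp, hrefl _⟩⟩
  | succ i ih =>
    obtain ⟨ih1, ih2⟩ := ih
    have hpos := rounds_pos hm i
    constructor
    · intro q hq
      simp only [tourn]
      rcases hop (tourn op m g i (min (2 * q) (rounds m i - 1)))
        (tourn op m g i (min (2 * q + 1) (rounds m i - 1))) with h | h
      · rw [h]; exact ih1 _ (by omega)
      · rw [h]; exact ih1 _ (by omega)
    · intro p hp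
      obtain ⟨q, hq, h⟩ := ih2 p hp
      refine ⟨q / 2, by simp only [rounds]; omega, htrans _ _ _ ?_ h⟩
      simp only [tourn]
      rcases Nat.mod_two_eq_zero_or_one q with h0 | h0
      · have : min (2 * (q / 2)) (rounds m i - 1) = q := by omega
        rw [this]; exact hl _ _
      · have : min (2 * (q / 2) + 1) (rounds m i - 1) = q := by omega
        rw [this]; exact hr _ _

/-- Widths of the max-min network. -/
def mmWidth (d m L i : ℕ) : ℕ :=
  if i = 0 then d else if i ≤ L then m * (2 * rounds m i)
  else if i ≤ 2 * L then 2 * rounds m (i - L) else 1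

/-- Selections of the max-min network. -/
def mmSel (m L i n : ℕ) : ℕ :=
  if i < L then (n / (2 * rounds m (i + 1))) * (2 * rounds m i) +
      (2 * min (n % (2 * rounds m (i + 1))) (rounds m i - 1) + 1)
  else if i = L then min n (m - 1) * 2 + 1
  else 2 * min n (rounds m (i - L) - 1)

theorem block_lt {k m R p : ℕ} (hk : k < m) (hp : p < R) : k * R + p < m * R := by
  calc k * R + p < k * R + R := by omega
    _ = (k + 1) * R := by ring
    _ ≤ m * R := Nat.mul_le_mul_right _ hk

theorem mmSel_lt {d m L : ℕ} (hm : 2 ≤ m) (hL1 : 1 ≤ L) (hL : rounds m L = 1) (i : ℕ) (hi : 1 ≤ i)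
    (hi2 : i ≤ 2 * L) (n : ℕ) (hn : n < mmWidth d m L (i + 1)) : mmSel m L i n < mmWidth d m L i := by
  have hp := rounds_pos (by omega : 1 ≤ m) i
  have hp' := rounds_pos (by omega : 1 ≤ m) (i - L)
  unfold mmSel
  split_ifs with h1 h2
  · unfold mmWidth at hn ⊢
    rw [if_neg (by omega), if_pos (by omega)] at hn ⊢
    apply block_lt
    · exact Nat.div_lt_of_lt_mul (by rwa [mul_comm])
    · omega
  · unfold mmWidth
    rw [if_neg (by omega), if_pos (by omega), h2, hL]
    omega
  · unfold mmWidth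
    rw [if_neg (by omega), if_neg (by omega), if_pos hi2]
    omega

theorem mm_min {m L : ℕ} (hm : 2 ≤ m) (g : ℕ → ℕ → ℝ) :
    ∀ i, i < L → ∀ k, k < m → ∀ q, q < rounds m (i + 1) →
    selVal (fun n => g (n / (2 * rounds m 1)) (min (n % (2 * rounds m 1)) (m - 1))) (mmSel m L) i
      (k * (2 * rounds m (i + 1)) + (2 * q + 1)) = tourn min m (g k) (i + 1) q := by
  intro i
  have dm : ∀ k R p : ℕ, p < R → (k * R + p) / R = k ∧ (k * R + p) % R = p := by
    intro k R p hp
    rw [mul_comm, Nat.mul_add_div (by omega), Nat.mul_add_mod, Nat.div_eq_of_lt hp,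
      Nat.mod_eq_of_lt hp]
    simp
  have par : ∀ k R q : ℕ, (k * (2 * R) + (2 * q + 1)) % 2 ≠ 0 := by
    intro k R q
    have : k * (2 * R) = 2 * (k * R) := by ring
    omega
  induction i with
  | zero =>
    intro _ k hk q hq
    simp only [selVal, pairSort, zero_add]
    rw [if_neg (par _ _ _)]
    simp only [zero_add] at hq
    obtain ⟨a1, a2⟩ := dm k (2 * rounds m 1) (2 * q) (by omega)
    obtain ⟨b1, b2⟩ := dm k (2 * rounds m 1) (2 * q + 1) (by omega)
    rw [show k * (2 * rounds m 1) + (2 * q + 1) - 1 = k * (2 * rounds m 1) + 2 * q by omega]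
    rw [a1, a2, b1, b2]
    rfl
  | succ i ih =>
    intro hi k hk q hq
    have hp := rounds_pos (by omega : 1 ≤ m) (i + 1)
    rw [selVal]
    unfold pairSort
    rw [if_neg (par _ _ _)]
    obtain ⟨a1, a2⟩ := dm k (2 * rounds m (i + 1 + 1)) (2 * q) (by omega)
    obtain ⟨b1, b2⟩ := dm k (2 * rounds m (i + 1 + 1)) (2 * q + 1) (by omega)
    rw [show k * (2 * rounds m (i + 1 + 1)) + (2 * q + 1) - 1
      = k * (2 * rounds m (i + 1 + 1)) + 2 * q by omega]
    have hsel : ∀ n, mmSel m L (i + 1) n = (n / (2 * rounds m (i + 1 + 1))) * (2 * rounds m (i + 1)) +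
      (2 * min (n % (2 * rounds m (i + 1 + 1))) (rounds m (i + 1) - 1) + 1) := by
      intro n; unfold mmSel; rw [if_pos hi]
    simp only [hsel]
    rw [a1, a2, b1, b2, ih (by omega) k hk _ (by omega), ih (by omega) k hk _ (by omega)]
    rfl

theorem mm_max {m L : ℕ} (hm : 2 ≤ m) (hL1 : 1 ≤ L) (hL : rounds m L = 1) (g : ℕ → ℕ → ℝ) :
    ∀ i, i < L → ∀ q, q < rounds m (i + 1) →
    selVal (fun n => g (n / (2 * rounds m 1)) (min (n % (2 * rounds m 1)) (m - 1))) (mmSel m L)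
      (L + i) (2 * q) = tourn max m (fun k => tourn min m (g k) L 0) (i + 1) q := by
  intro i
  induction i with
  | zero =>
    intro _ q hq
    obtain ⟨l, rfl⟩ : ∃ l, L = l + 1 := ⟨L - 1, by omega⟩
    rw [add_zero, selVal]
    unfold pairSort
    rw [if_pos (by omega)]
    have hsel : ∀ n, mmSel m (l + 1) (l + 1) n = min n (m - 1) * 2 + 1 := by
      intro n; unfold mmSel; rw [if_neg (by omega), if_pos rfl]
    simp only [hsel]
    have key := mm_min (L := l + 1) hm g l (by omega)
    simp only [hL] at key
    have e1 := key (min (2 * q) (m - 1)) (by omega) 0 (by omega)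
    have e2 := key (min (2 * q + 1) (m - 1)) (by omega) 0 (by omega)
    simp only [mul_zero, mul_one, zero_add] at e1 e2
    rw [e1, e2]
    rfl
  | succ i ih =>
    intro hi q hq
    have hp := rounds_pos (by omega : 1 ≤ m) (i + 1)
    rw [← add_assoc, selVal]
    unfold pairSort
    rw [if_pos (by omega)]
    have hsel : ∀ n, mmSel m L (L + i + 1) n = 2 * min n (rounds m (i + 1) - 1) := by
      intro n; unfold mmSel
      rw [if_neg (by omega), if_neg (by omega), show L + i + 1 - L = i + 1 by omega]
    simp only [hsel]
    rw [ih (by omega) _ (by omega), ih (by omega) _ (by omega)]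
    rfl

theorem exists_maxmin_net {d m : ℕ} (hm : 2 ≤ m) (v : ℕ → ℕ → Fin d → ℝ) (c : ℕ → ℕ → ℝ)
    (hv : ∀ k j, ∑ t, (v k j t) ^ 2 ≤ 1) :
    ∃ N : GroupSortNet 2 d, N.Assumption1 ∧
      (∀ x, N.eval x = tourn max m (fun k => tourn min m (fun j => ∑ t, v k j t * x t + c k j)
        (Nat.clog 2 m) 0) (Nat.clog 2 m) 0) ∧
      N.depth = 2 * Nat.clog 2 m + 1 ∧ N.size ≤ 3 * m ^ 2 + m - 1 := by
  have htot := rounds_total hm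
  have hL := rounds_clog (by omega : 1 ≤ m)
  have hL1 : 1 ≤ Nat.clog 2 m := Nat.clog_pos (by norm_num) hm
  generalize Nat.clog 2 m = L at *
  obtain ⟨l, rfl⟩ : ∃ l, L = l + 1 := ⟨L - 1, by omega⟩
  have hev : ∀ i, 1 ≤ i → i ≤ (2 * l + 1) + 1 → 2 ∣ mmWidth d m (l + 1) i := by
    intro i h1 h2
    unfold mmWidth
    rw [if_neg (by omega)]
    split_ifs
    · exact (Dvd.intro _ rfl : 2 ∣ 2 * rounds m i).mul_left _
    · exact Dvd.intro _ rfl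
    · omega
  have hout : mmWidth d m (l + 1) (2 * l + 1 + 2) = 1 := by
    unfold mmWidth
    rw [if_neg (by omega), if_neg (by omega), if_neg (by omega)]
  refine ⟨selNet (2 * l + 1 + 1) (mmWidth d m (l + 1)) (by simp [mmWidth]) hout hev
    (fun n => v (n / (2 * rounds m 1)) (min (n % (2 * rounds m 1)) (m - 1)))
    (fun n => c (n / (2 * rounds m 1)) (min (n % (2 * rounds m 1)) (m - 1)))
    (mmSel m (l + 1)), selNet_assumption _ _ _ _ _ _ _ _ (fun n => hv _ _), ?_, ?_, ?_⟩
  · intro x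
    rw [selNet_eval (2 * l + 1) _ _ _ _ _ _ _
      (fun i h1 h2 n hn => mmSel_lt hm hL1 hL i h1 (by omega) n hn) x]
    have hs0 : mmSel m (l + 1) (2 * l + 1 + 1) 0 = 2 * 0 := by
      unfold mmSel
      rw [if_neg (by omega), if_neg (by omega)]; simp
    rw [hs0]
    have := mm_max hm hL1 hL (fun k j => ∑ t, v k j t * x t + c k j) l (by omega) 0 (by omega)
    rw [← this, show l + 1 + l = 2 * l + 1 by ring]
  · change 2 * l + 1 + 1 + 1 = _
    ring
  · refine le_trans (le_of_eq ?_) htot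
    change ∑ i ∈ Finset.Icc 1 (2 * l + 1 + 1 + 1 - 1), mmWidth d m (l + 1) i = _
    rw [show 2 * l + 1 + 1 + 1 - 1 = (l + 1) + (l + 1) by omega,
      ← Finset.Ico_add_one_right_eq_Icc, Finset.sum_Ico_eq_sum_range, Nat.add_sub_cancel,
      Finset.sum_range_add, add_mul, one_mul, Finset.mul_sum]
    congr 1
    · refine Finset.sum_congr rfl fun i hi => ?_
      rw [Finset.mem_range] at hi
      unfold mmWidth
      rw [if_neg (by omega), if_pos (by omega), add_comm 1 i]
    · refine Finset.sum_congr rfl fun i hi => ?_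
      rw [Finset.mem_range] at hi
      unfold mmWidth
      rw [if_neg (by omega), if_neg (by omega), if_pos (by omega),
        show 1 + (l + 1 + i) - (l + 1) = i + 1 by omega]

/-- Any `1`-Lipschitz (Euclidean norm) `m`-piecewise linear function `f : ℝ^d → ℝ` with
convex subdomains is exactly represented by a GroupSort network of grouping size `2`
satisfying Assumption 1, with depth `2⌈log₂ m⌉ + 1` and size at most `3m² + m - 1`. -/
theorem groupSortNet_represents_pwl_convex {d : ℕ} (f : (Fin d → ℝ) → ℝ) (m : ℕ)
    (hm : 2 ≤ m)
    (Ω : Fin m → Set (Fin d → ℝ)) (a : Fin m → Fin d → ℝ) (b : Fin m → ℝ)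
    (hf : IsPWLWith f m Ω a b) (hconv : ∀ i, Convex ℝ (Ω i))
    (hlip : ∀ x y : Fin d → ℝ, |f x - f y| ≤ Real.sqrt (∑ i, (x i - y i) ^ 2)) :
    ∃ N : GroupSortNet 2 d, N.Assumption1 ∧ (∀ x, N.eval x = f x) ∧
      N.depth = 2 * Nat.clog 2 m + 1 ∧
      N.size ≤ 3 * m ^ 2 + m - 1 := by

  obtain ⟨_, _, _, hcov, hfi⟩ := hf
  choose v c hv hup hlo using fun k j : Fin m => sandwich_coord (Ω k) (Ω j) (hconv k) (hconv j) f
    hlip ⟨a k, b k, hfi k⟩ ⟨a j, b j, hfi j⟩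
  let cl : ℕ → Fin m := fun n => ⟨min n (m - 1), by omega⟩
  have hcl : ∀ k : Fin m, cl k = k := fun k => Fin.ext (by
    have := k.2
    simp only [cl]; omega)
  obtain ⟨N, h1, h2, h3, h4⟩ := exists_maxmin_net hm (fun k j => v (cl k) (cl j))
    (fun k j => c (cl k) (cl j)) (fun k j => hv _ _)
  refine ⟨N, h1, fun x => ?_, h3, h4⟩
  rw [h2]
  have hL := rounds_clog (by omega : 1 ≤ m)
  have hmin := fun g : ℕ → ℝ => tourn_spec min (· ≤ ·) (fun a b => min_choice a b) min_le_left
    min_le_right le_refl (fun _ _ _ => le_trans) (by omega : 1 ≤ m) g (Nat.clog 2 m)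
  have hmax := fun g : ℕ → ℝ => tourn_spec max (· ≥ ·) (fun a b => max_choice a b) le_max_left
    le_max_right le_refl (fun _ _ _ h h' => le_trans h' h) (by omega : 1 ≤ m) g (Nat.clog 2 m)
  simp only [hL, Nat.lt_one_iff, forall_eq, exists_eq_left] at hmin hmax
  obtain ⟨i, hi⟩ := Set.mem_iUnion.1 (hcov ▸ Set.mem_univ x : x ∈ ⋃ i, Ω i)
  apply le_antisymm
  · obtain ⟨k, hk, e⟩ := (hmax (fun k => tourn min m (fun j => ∑ t, v (cl k) (cl j) t * x t
      + c (cl k) (cl j)) (Nat.clog 2 m) 0)).1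
    rw [e]
    refine ((hmin _).2 i i.2).trans ?_
    rw [hcl]
    exact hlo _ _ x hi
  · refine le_trans ?_ ((hmax _).2 i i.2)
    obtain ⟨p, hp, e⟩ := (hmin (fun j => ∑ t, v (cl i) (cl j) t * x t + c (cl i) (cl j))).1
    rw [e, hcl]
    exact hup _ _ x hi
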